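/- Let G = (X, L) be an interval greedoid, let k be an integer with 1 ≤ k < rk(G), and let q : L → ℝ_{>0} be a k-admissible weight function. Then L_q(k)² ≥ L_q(k−1)·L_q(k+1), where L_q(j) = Σ_{α ∈ L, |α| = j} q(α). -/

import Mathlib

open scoped Classical BigOperators

noncomputable section

variable {X : Type*} [Fintype X] [DecidableEq X]

/-- All words of length `r` over the alphabet `X`. -/
def wordsLen (X : Type*) [Fintype X] [DecidableEq X] (r : ℕ) : Finset (List X) :=
  (Finset.univ : Finset (Fin r → X)).image List.ofFn

namespace Grd

/-- The set `Cnt(α)` of one-letter continuations of a word `α` in the language `L`. -/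
def Cnt (L : List X → Prop) (α : List X) : Finset X :=
  Finset.univ.filter (fun x => L (α ++ [x]))

/-- The set `Des_α(x)` of descendants of `x` with respect to `α`:
letters `y` with `αxy ∈ L` and `αy ∉ L`. -/
def Des (L : List X → Prop) (α : List X) (x : X) : Finset X :=
  Finset.univ.filter (fun y => L (α ++ [x, y]) ∧ ¬ L (α ++ [y]))

/-- The passive non-continuations `Pas_α(x,y)`. -/
def Pas (L : List X → Prop) (α : List X) (x y : X) : Finset X :=
  Finset.univ.filter (fun z =>
    ¬ L (α ++ [z]) ∧ ¬ L (α ++ [x, z]) ∧ ¬ L (α ++ [y, z]) ∧ L (α ++ [x, y, z]))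

/-- The active non-continuations `Act_α(x,y)`. -/
def Act (L : List X → Prop) (α : List X) (x y : X) : Finset X :=
  Finset.univ.filter (fun z =>
    ¬ L (α ++ [z]) ∧ L (α ++ [x, z]) ∧ L (α ++ [y, z]) ∧ L (α ++ [x, y, z]))

/-- The parallel class of `x ∈ Cnt(α)`:  continuations `y` with `y ∼_α x`, i.e. `y = x`
or `αxy ∉ L`. -/
def parClass (L : List X → Prop) (α : List X) (x : X) : Finset X :=
  (Cnt L α).filter (fun y => y = x ∨ ¬ L (α ++ [x, y]))

/-- The set `Par(α)` of parallel classes of `α`. -/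
def Par (L : List X → Prop) (α : List X) : Finset (Finset X) :=
  (Cnt L α).image (parClass L α)

/-- The scaled weight function `ω(α) = q(α)/c_{|α|}`. -/
def scaledWt (q : List X → ℝ) (c : ℕ → ℝ) (α : List X) : ℝ :=
  q α / c α.length

/-- The quantity `b_α(C)`: for a singleton parallel class `C = {x}` it equals
`Σ_{y ∈ Des_α(x)} ω(α)·ω(αxy)/ω(αx)²`, and it is `0` for classes with at least two
elements. -/
def bClass (L : List X → Prop) (q : List X → ℝ) (c : ℕ → ℝ) (α : List X)
    (C : Finset X) : ℝ :=
  if C.card = 1 then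
    ∑ x ∈ C, ∑ y ∈ Des L α x,
      scaledWt q c α * scaledWt q c (α ++ [x, y]) / (scaledWt q c (α ++ [x])) ^ 2
  else 0

/-- The weighted count `L_q(j) = Σ_{α ∈ L, |α| = j} q(α)`. -/
def Lq (L : List X → Prop) (q : List X → ℝ) (j : ℕ) : ℝ :=
  ∑ α ∈ (wordsLen X j).filter (fun α => L α), q α

end Grd

theorem gen_eig {ι : Type*} [Fintype ι] [DecidableEq ι] (M : Matrix ι ι ℝ) (hs : ∀ i j, M i j = M j i)
    (hn : ∀ i j, 0 ≤ M i j) (h : ι → ℝ) (hp : ∀ i, 0 < h i) (n : ι)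
    (hrow : ∀ i, 0 < M n i ∨ ∀ j, M i j = 0)
    (hkey : ∀ v : ι → ℝ, ∑ i, v i * M.mulVec v i ≤ ∑ i, h i * (M.mulVec v i)^2 / M.mulVec h i)
    (d : ι → ℝ) (hd : ∀ i, d i = if M.mulVec h i = 0 then 1 else M.mulVec h i / h i)
    (hdp : ∀ i, 0 < d i)
    (l : ℝ) (v : ι → ℝ) (hv : ∃ i, v i ≠ 0) (he : ∀ i, M.mulVec v i = l * d i * v i) :
    l ≤ 0 ∨ ∃ c, ∀ i, d i * v i = c * M.mulVec h i := by
  by_cases hl : l ≤ 0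
  · exact Or.inl hl
  right
  push Not at hl
  have hK : 0 < ∑ i, d i * v i ^ 2 := by
    obtain ⟨i, hi⟩ := hv
    apply Finset.sum_pos' (fun i _ => mul_nonneg (hdp i).le (sq_nonneg _))
    exact ⟨i, Finset.mem_univ _, mul_pos (hdp i) (by positivity)⟩
  have h1 : ∑ i, v i * M.mulVec v i = l * ∑ i, d i * v i ^ 2 := by
    rw [Finset.mul_sum]
    exact Finset.sum_congr rfl fun i _ => by rw [he]; ring
  have h2 : ∑ i, h i * (M.mulVec v i)^2 / M.mulVec h i ≤ l^2 * ∑ i, d i * v i ^ 2 := by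
    rw [Finset.mul_sum]
    apply Finset.sum_le_sum
    intro i _
    by_cases hz : M.mulVec h i = 0
    · rw [hz, div_zero]
      have := (hdp i).le
      positivity
    · have hh := (hp i).ne'
      have e : d i = M.mulVec h i / h i := by rw [hd, if_neg hz]
      rw [he, e]
      apply le_of_eq
      field_simp
  have hl1 : 1 ≤ l := by
    have h3 := (hkey v).trans h2
    rw [h1] at h3
    have h4 := le_of_mul_le_mul_right h3 hK
    nlinarith
  have hMh : ∀ i, M.mulVec h i / h i ≤ d i := by
    intro i
    rw [hd]
    split_ifs with hz
    · rw [hz]; simp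
    · exact le_rfl
  have h5 : ∑ i, ∑ j, M i j * (h i * h j) * (v i / h i - v j / h j)^2 ≤ 0 := by
    have e : ∀ i j, M i j * (h i * h j) * (v i / h i - v j / h j)^2
        = v i ^2 / h i * (M i j * h j) - 2 * (v i * (M i j * v j)) + v j ^2 / h j * (M j i * h i) := by
      intro i j
      have a := (hp i).ne'
      have b := (hp j).ne'
      rw [hs j i]
      field_simp
      ring
    simp_rw [e, Finset.sum_add_distrib, Finset.sum_sub_distrib]
    rw [Finset.sum_comm (f := fun i j => v j ^2 / h j * (M j i * h i))]
    simp_rw [← Finset.mul_sum]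
    have q1 : ∀ w : ι → ℝ, ∀ i, ∑ j, M i j * w j = M.mulVec w i := by
      intro w i; rfl
    simp_rw [q1]
    rw [h1]
    have : ∑ i, v i ^2 / h i * M.mulVec h i ≤ ∑ i, d i * v i ^ 2 := by
      apply Finset.sum_le_sum
      intro i _
      have := mul_le_mul_of_nonneg_left (hMh i) (sq_nonneg (v i))
      calc _ = v i ^2 * (M.mulVec h i / h i) := by ring
        _ ≤ _ := by linarith
    nlinarith
  have h6 : ∀ i j, M i j * (h i * h j) * (v i / h i - v j / h j)^2 = 0 := by
    have nn : ∀ i j, 0 ≤ M i j * (h i * h j) * (v i / h i - v j / h j)^2 := fun i j =>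
      mul_nonneg (mul_nonneg (hn i j) (mul_pos (hp i) (hp j)).le) (sq_nonneg _)
    have h7 := le_antisymm h5 (Finset.sum_nonneg fun i _ => Finset.sum_nonneg fun j _ => nn i j)
    intro i j
    rw [Finset.sum_eq_zero_iff_of_nonneg (fun i _ => Finset.sum_nonneg fun j _ => nn i j)] at h7
    have h8 := h7 i (Finset.mem_univ _)
    rw [Finset.sum_eq_zero_iff_of_nonneg (fun j _ => nn i j)] at h8
    exact h8 j (Finset.mem_univ _)
  refine ⟨v n / h n, fun j => ?_⟩
  rcases hrow j with hj | hj
  · have h7 := h6 n j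
    have h8 : (v n / h n - v j / h j)^2 = 0 := by
      rcases mul_eq_zero.1 h7 with h9 | h9
      · exact absurd h9 (mul_pos hj (mul_pos (hp n) (hp j))).ne'
      · exact h9
    have h9 : v n / h n = v j / h j := by
      have := pow_eq_zero_iff (two_ne_zero) |>.1 h8
      linarith
    have hpos : 0 < M.mulVec h j := by
      apply Finset.sum_pos' (fun i _ => mul_nonneg (hn j i) (hp i).le)
      exact ⟨n, Finset.mem_univ _, mul_pos (by rw [hs]; exact hj) (hp n)⟩
    rw [h9, hd, if_neg hpos.ne']
    ring
  · have z : ∀ w : ι → ℝ, M.mulVec w j = 0 := by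
      intro w
      apply Finset.sum_eq_zero
      intro i _
      simp [hj i]
    have := he j
    rw [z] at this ⊢
    have h3 : l * (d j * v j) = 0 := by linarith
    rcases mul_eq_zero.1 h3 with h4 | h4
    · linarith
    · rw [h4]; ring

theorem abstract_hyp {ι : Type*} [Fintype ι] [DecidableEq ι] (M : Matrix ι ι ℝ) (hs : ∀ i j, M i j = M j i)
    (hn : ∀ i j, 0 ≤ M i j) (h : ι → ℝ) (hp : ∀ i, 0 < h i) (n : ι)
    (hrow : ∀ i, 0 < M n i ∨ ∀ j, M i j = 0)
    (hkey : ∀ v : ι → ℝ, ∑ i, v i * M.mulVec v i ≤ ∑ i, h i * (M.mulVec v i)^2 / M.mulVec h i)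
    (x : ι → ℝ) (hx : ∑ i, x i * M.mulVec h i = 0) : ∑ i, x i * M.mulVec x i ≤ 0 := by
  obtain ⟨d, hd⟩ : ∃ d : ι → ℝ, ∀ i, d i = if M.mulVec h i = 0 then 1 else M.mulVec h i / h i :=
    ⟨_, fun i => rfl⟩
  have hdp : ∀ i, 0 < d i := by
    intro i
    rw [hd]
    split_ifs with hz
    · exact one_pos
    · have : 0 ≤ M.mulVec h i := Finset.sum_nonneg fun j _ => mul_nonneg (hn i j) (hp j).le
      exact div_pos (lt_of_le_of_ne this (Ne.symm hz)) (hp i)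
  obtain ⟨s, hs0⟩ : ∃ s : ι → ℝ, ∀ i, s i = Real.sqrt (d i) := ⟨_, fun i => rfl⟩
  have hsp : ∀ i, 0 < s i := fun i => by rw [hs0]; exact Real.sqrt_pos.2 (hdp i)
  have hsd : ∀ i, s i * s i = d i := fun i => by rw [hs0]; exact Real.mul_self_sqrt (hdp i).le
  set B : Matrix ι ι ℝ := Matrix.of fun i j => M i j / (s i * s j) with hB
  have hBH : B.IsHermitian := by
    ext i j
    simp [hB, Matrix.conjTranspose_apply, hs j i, mul_comm]
  have hBM : ∀ (w : ι → ℝ) i, B.mulVec (fun j => s j * w j) i = M.mulVec w i / s i := by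
    intro w i
    simp only [Matrix.mulVec, dotProduct, hB, Matrix.of_apply, Finset.sum_div]
    refine Finset.sum_congr rfl fun j _ => ?_
    have := (hsp i).ne'
    have := (hsp j).ne'
    field_simp
  have expand : ∀ u : ι → ℝ, ∑ i, u i * B.mulVec u i =
      ∑ k, hBH.eigenvalues k * (∑ i, u i * hBH.eigenvectorBasis k i)^2 := by
    intro u
    have e1 := hBH.eigenvectorBasis.sum_inner_mul_inner (WithLp.toLp 2 u) (WithLp.toLp 2 (B.mulVec u))
    have ii : ∀ a b : EuclideanSpace ℝ ι, inner ℝ a b = ∑ i, a i * b i := by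
      intro a b
      simp [PiLp.inner_apply, mul_comm]
    simp only [ii] at e1
    rw [← e1]
    refine Finset.sum_congr rfl fun k _ => ?_
    have ek := hBH.mulVec_eigenvectorBasis k
    have e2 : ∑ i, hBH.eigenvectorBasis k i * B.mulVec u i = ∑ i, u i * B.mulVec (hBH.eigenvectorBasis k) i := by
      simp only [Matrix.mulVec, dotProduct, Finset.mul_sum]
      rw [Finset.sum_comm]
      refine Finset.sum_congr rfl fun i _ => Finset.sum_congr rfl fun j _ => ?_
      have : B j i = B i j := by simp [hB, hs j i, mul_comm]
      rw [this]; ring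
    rw [e2, ek]
    simp only [Pi.smul_apply, smul_eq_mul]
    rw [sq]
    have : ∑ i, u i * (hBH.eigenvalues k * hBH.eigenvectorBasis k i) = hBH.eigenvalues k * ∑ i, u i * hBH.eigenvectorBasis k i := by
      rw [Finset.mul_sum]; exact Finset.sum_congr rfl fun i _ => by ring
    rw [this]; ring
  have e3 : ∑ i, x i * M.mulVec x i = ∑ i, (s i * x i) * B.mulVec (fun j => s j * x j) i := by
    refine Finset.sum_congr rfl fun i _ => ?_
    rw [hBM]
    have := (hsp i).ne'
    field_simp
  rw [e3, expand]
  apply Finset.sum_nonpos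
  intro k _
  obtain ⟨e, hee⟩ : ∃ e : ι → ℝ, ∀ i, e i = hBH.eigenvectorBasis k i := ⟨_, fun i => rfl⟩
  have hev : ∀ i, s i * (e i / s i) = hBH.eigenvectorBasis k i := by
    intro i
    have := (hsp i).ne'
    rw [← hee]
    field_simp
  have key := gen_eig M hs hn h hp n hrow hkey d hd hdp (hBH.eigenvalues k) (fun i => e i / s i)
    (by
      by_contra hc
      push Not at hc
      have : hBH.eigenvectorBasis k = 0 := by
        ext i
        rw [← hev, hc]; simp
      exact hBH.eigenvectorBasis.orthonormal.ne_zero k this)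
    (by
      intro i
      have h1 := hBM (fun i => e i / s i) i
      have h2 : (fun j => s j * (e j / s j)) = (hBH.eigenvectorBasis k : ι → ℝ) := by
        funext j; exact hev j
      have ek := hBH.mulVec_eigenvectorBasis k
      rw [h2, ek] at h1
      simp only [Pi.smul_apply, smul_eq_mul] at h1
      rw [← hee] at h1
      have := (hsp i).ne'
      rw [← hsd]
      field_simp
      field_simp at h1
      linarith)
  rcases key with h1 | ⟨c, hcc⟩
  · exact mul_nonpos_of_nonpos_of_nonneg h1 (sq_nonneg _)
  · have : ∑ i, s i * x i * hBH.eigenvectorBasis k i = 0 := by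
      have : ∑ i, s i * x i * hBH.eigenvectorBasis k i = c * ∑ i, x i * M.mulVec h i := by
        rw [Finset.mul_sum]
        refine Finset.sum_congr rfl fun i _ => ?_
        have h3 := hcc i
        rw [← hsd] at h3
        rw [← hev]
        linear_combination x i * h3
      rw [this, hx, mul_zero]
    rw [this]; simp

/-- Hyperbolicity from negativity on a hyperplane. -/
theorem hyp_of_hyperplane {V : Type*} [AddCommGroup V] [Module ℝ V] (f : V →ₗ[ℝ] V →ₗ[ℝ] ℝ)
    (hs : ∀ u v, f u v = f v u) (h : V)
    (hneg : ∀ v, f v h = 0 → f v v ≤ 0) (v w : V) (hw : 0 < f w w) :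
    f v v * f w w ≤ (f v w)^2 := by
  have ha : f w h ≠ 0 := fun h0 => absurd (hneg w h0) (not_le.2 hw)
  have h1 := hneg (f w h • v - f v h • w) (by simp; ring)
  simp only [map_sub, map_smul, LinearMap.sub_apply, LinearMap.smul_apply, smul_eq_mul] at h1
  rw [hs w v] at h1
  set a := f w h
  set b := f v h
  have h2 : 0 < a^2 := by positivity
  have h3 : a^2 * (f v v * f w w) ≤ a^2 * (f v w)^2 := by
    have := mul_le_mul_of_nonneg_right h1 hw.le
    nlinarith [sq_nonneg (a * f v w - b * f w w)]
  exact le_of_mul_le_mul_left h3 h2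

set_option linter.unusedSectionVars false
set_option linter.unusedVariables false

namespace Grd

/-- Weighted sum of the extensions of `α` by `r` letters. -/
def Qs (q : List X → ℝ) (r : ℕ) (α : List X) : ℝ := ∑ β ∈ wordsLen X r, q (α ++ β)

theorem Qs_eq (q : List X → ℝ) (r : ℕ) (α : List X) :
    Qs q r α = ∑ f : Fin r → X, q (α ++ List.ofFn f) := by
  unfold Qs wordsLen
  rw [Finset.sum_image]
  intro a _ b _ h
  exact List.ofFn_injective h

theorem Qs_zero (q : List X → ℝ) (α : List X) : Qs q 0 α = q α := by
  rw [Qs_eq]; simp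

theorem Qs_succ (q : List X → ℝ) (r : ℕ) (α : List X) :
    Qs q (r + 1) α = ∑ x, Qs q r (α ++ [x]) := by
  simp only [Qs_eq]
  rw [← Fintype.sum_prod_type']
  symm
  apply Fintype.sum_equiv (Fin.consEquiv (fun _ : Fin (r+1) => X))
  rintro ⟨x, f⟩
  simp [Fin.consEquiv, List.append_assoc]

/-- All the hypotheses of the main theorem. -/
structure GD (L : List X → Prop) (m k : ℕ) (q : List X → ℝ) (c : ℕ → ℝ) : Prop where
  h_simple : ∀ α : List X, L α → α.Nodup
  h_hered : ∀ α β : List X, L (α ++ β) → L α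
  h_exch : ∀ α β : List X, L α → L β → β.length < α.length → ∃ x ∈ α, L (β ++ [x])
  h_interval : ∀ (α β γ : List X) (x : X),
      L (α ++ [x]) → L (α ++ β ++ γ ++ [x]) → L (α ++ β ++ [x])
  h_rk_ex : ∃ α : List X, L α ∧ α.length = m
  hk2 : k < m
  hq_pos : ∀ α : List X, L α → 0 < q α
  hq_zero : ∀ α : List X, ¬ L α → q α = 0
  hc : ∀ i, 0 < c i
  hContInv : ∀ α : List X, L α → α.length < k →
      ∀ x ∈ Grd.Cnt L α, ∀ y ∈ Grd.Cnt L α, ∀ β : List X,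
        q (α ++ [x, y] ++ β) = q (α ++ [y, x] ++ β)
  hPAMon : ∀ α : List X, L α → α.length < k →
      ∀ x ∈ Grd.Cnt L α, ∀ y ∈ Grd.Cnt L α, x ≠ y → ∀ r : ℕ,
        (∑ z ∈ Grd.Act L α x y, ∑ β ∈ wordsLen X r, q (α ++ [x, y, z] ++ β)) ≤
          (∑ z ∈ Grd.Pas L α x y, ∑ β ∈ wordsLen X r, q (α ++ [x, y, z] ++ β))
  hLogMod : ∀ α : List X, L α → α.length < k →
      ∀ x ∈ Grd.Cnt L α, ∀ y ∈ Grd.Cnt L α, L (α ++ [x, y]) →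
        Grd.scaledWt q c (α ++ [x]) * Grd.scaledWt q c (α ++ [y]) =
          Grd.scaledWt q c α * Grd.scaledWt q c (α ++ [x, y])
  hFewDes : ∀ α : List X, L α → α.length < k →
      ∀ C ∈ Grd.Par L α, 2 ≤ C.card → ∀ x ∈ C, Grd.Des L α x = ∅
  hSynMon : ∀ α : List X, L α → α.length < k →
      ∀ x ∈ Grd.Cnt L α,
        (∑ y ∈ Grd.Des L α x, Grd.scaledWt q c α * Grd.scaledWt q c (α ++ [x, y])) ≤
          (Grd.scaledWt q c (α ++ [x])) ^ 2
  hScaleMon : ∀ α : List X, L α → α.length < k →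
      c α.length * c (α.length + 2) ≤ (c (α.length + 1)) ^ 2 ∨
        ((∀ C ∈ Grd.Par L α, Grd.bClass L q c α C < 1) ∧
          (1 - (c (α.length + 1)) ^ 2 / (c α.length * c (α.length + 2))) *
              (∑ C ∈ Grd.Par L α, 1 / (1 - Grd.bClass L q c α C)) ≤ 1)

variable {L : List X → Prop} {m k : ℕ} {q : List X → ℝ} {c : ℕ → ℝ}

theorem GD.q_nonneg (G : GD L m k q c) (α : List X) : 0 ≤ q α := by
  by_cases h : L α
  · exact (G.hq_pos α h).le
  · rw [G.hq_zero α h]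

theorem GD.q_ne (G : GD L m k q c) (α : List X) : q α ≠ 0 ↔ L α := by
  constructor
  · intro h
    by_contra h2
    exact h (G.hq_zero α h2)
  · intro h
    exact (G.hq_pos α h).ne'

theorem GD.Qs_nonneg (G : GD L m k q c) (r : ℕ) (α : List X) : 0 ≤ Qs q r α :=
  Finset.sum_nonneg fun _ _ => G.q_nonneg _

theorem GD.Qs_eq_zero (G : GD L m k q c) (r : ℕ) (α : List X) (h : ¬ L α) : Qs q r α = 0 :=
  Finset.sum_eq_zero fun β _ => G.hq_zero _ fun h2 => h (G.h_hered _ _ h2)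

theorem GD.Qs_pos (G : GD L m k q c) (r : ℕ) : ∀ (α : List X), L α → α.length + r ≤ m →
    0 < Qs q r α := by
  induction r with
  | zero => intro α h _; rw [Qs_zero]; exact G.hq_pos α h
  | succ r ih =>
    intro α h hl
    rw [Qs_succ]
    obtain ⟨γ, hγ, hγm⟩ := G.h_rk_ex
    obtain ⟨x, _, hx⟩ := G.h_exch γ α hγ h (by omega)
    refine Finset.sum_pos' (fun _ _ => G.Qs_nonneg _ _) ⟨x, Finset.mem_univ _, ih _ hx ?_⟩
    simp; omega

theorem GD.Qs_swap (G : GD L m k q c) (r : ℕ) (α : List X) (h : L α) (hk : α.length < k) (x y : X)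
    (hx : L (α ++ [x])) (hy : L (α ++ [y])) (β : List X) :
    Qs q r (α ++ x :: y :: β) = Qs q r (α ++ y :: x :: β) := by
  unfold Qs
  refine Finset.sum_congr rfl fun γ _ => ?_
  have := G.hContInv α h hk x (by simp [Cnt, hx]) y (by simp [Cnt, hy]) (β ++ γ)
  simpa using this

theorem GD.L_swap (G : GD L m k q c) (α : List X) (h : L α) (hk : α.length < k) (x y : X)
    (hx : L (α ++ [x])) (hy : L (α ++ [y])) : L (α ++ [x, y]) ↔ L (α ++ [y, x]) := by
  rw [← G.q_ne, ← G.q_ne]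
  have := G.hContInv α h hk x (by simp [Cnt, hx]) y (by simp [Cnt, hy]) []
  simp only [List.append_nil] at this
  rw [this]

theorem GD.pre1 (G : GD L m k q c) {α : List X} {x : X} {β : List X} (h : L (α ++ x :: β)) :
    L (α ++ [x]) := G.h_hered _ β (by simpa using h)

theorem GD.pre2 (G : GD L m k q c) {α : List X} {x y : X} {β : List X} (h : L (α ++ x :: y :: β)) :
    L (α ++ [x, y]) := G.h_hered _ β (by simpa using h)

/-- Letter seen after `x`: descendants are identified with `x`. -/
def pr (L : List X → Prop) (α : List X) (x z : X) : X := if L (α ++ [z]) then z else x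

def Tm (L : List X → Prop) (α : List X) (x : X) : (Option X → ℝ) →ₗ[ℝ] (Option X → ℝ) :=
  LinearMap.funLeft ℝ ℝ (Option.map (pr L α x))

def Nf (q : List X → ℝ) (r : ℕ) (α : List X) : (Option X → ℝ) →ₗ[ℝ] ℝ where
  toFun w := ∑ z, Qs q r (α ++ [z]) * w (some z) + Qs q r α * w none
  map_add' u v := by
    simp only [Pi.add_apply, mul_add, Finset.sum_add_distrib]; ring
  map_smul' a u := by
    simp only [Pi.smul_apply, smul_eq_mul, RingHom.id_apply, mul_add, Finset.mul_sum]
    congr 1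
    · exact Finset.sum_congr rfl fun _ _ => by ring
    · ring

theorem Nf_apply (q : List X → ℝ) (r : ℕ) (α : List X) (w : Option X → ℝ) :
    Nf q r α w = ∑ z, Qs q r (α ++ [z]) * w (some z) + Qs q r α * w none := rfl

theorem Tm_some (L : List X → Prop) (α : List X) (x z : X) (w : Option X → ℝ) :
    Tm L α x w (some z) = w (some (pr L α x z)) := rfl

theorem Tm_none (L : List X → Prop) (α : List X) (x : X) (w : Option X → ℝ) :
    Tm L α x w none = w none := rfl

def Row (L : List X → Prop) (q : List X → ℝ) (r : ℕ) (α : List X) :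
    Option X → ((Option X → ℝ) →ₗ[ℝ] ℝ)
  | none => Nf q r α
  | some x => (Nf q r (α ++ [x])) ∘ₗ Tm L α x

/-- The bilinear form of the atlas. -/
def Fm (L : List X → Prop) (q : List X → ℝ) (r : ℕ) (α : List X) :
    (Option X → ℝ) →ₗ[ℝ] (Option X → ℝ) →ₗ[ℝ] ℝ :=
  LinearMap.mk₂ ℝ (fun u w => ∑ i, u i * Row L q r α i w)
    (by intro a b w; simp [add_mul, Finset.sum_add_distrib])
    (by intro a b w; simp only [Pi.smul_apply, smul_eq_mul, Finset.mul_sum, mul_assoc])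
    (by intro a b w; simp [mul_add, Finset.sum_add_distrib])
    (by intro a b w; simp only [map_smul, smul_eq_mul, Finset.mul_sum]
        exact Finset.sum_congr rfl fun _ _ => by ring)

theorem Fm_apply (r : ℕ) (α : List X) (u w : Option X → ℝ) :
    Fm L q r α u w = ∑ i, u i * Row L q r α i w := rfl

theorem Fm_apply' (r : ℕ) (α : List X) (u w : Option X → ℝ) :
    Fm L q r α u w = u none * Nf q r α w +
      ∑ x, u (some x) * Nf q r (α ++ [x]) (Tm L α x w) := by
  rw [Fm_apply, Fintype.sum_option]; rfl

theorem Fm_expand (r : ℕ) (α : List X) (u w : Option X → ℝ) :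
    Fm L q r α u w = Qs q r α * (u none * w none)
      + w none * (∑ x, Qs q r (α ++ [x]) * u (some x))
      + u none * (∑ x, Qs q r (α ++ [x]) * w (some x))
      + ∑ x, ∑ z, Qs q r (α ++ [x, z]) * (u (some x) * w (some (pr L α x z))) := by
  rw [Fm_apply']
  simp only [Nf_apply, Tm_some, Tm_none, List.append_assoc, List.singleton_append, mul_add,
    Finset.sum_add_distrib, Finset.mul_sum]
  have e1 : ∑ x, ∑ i, u (some x) * (Qs q r (α ++ [x, i]) * w (some (pr L α x i)))
      = ∑ x, ∑ z, Qs q r (α ++ [x, z]) * (u (some x) * w (some (pr L α x z))) :=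
    Finset.sum_congr rfl fun _ _ => Finset.sum_congr rfl fun _ _ => by ring
  have e2 : ∑ x, u (some x) * (Qs q r (α ++ [x]) * w none)
      = ∑ x, w none * (Qs q r (α ++ [x]) * u (some x)) :=
    Finset.sum_congr rfl fun _ _ => by ring
  rw [e1, e2]
  ring

/-- The swap identity for pairs. -/
theorem GD.pair_symm (G : GD L m k q c) (r : ℕ) (α : List X) (h : L α) (hk : α.length < k)
    (u w : X → ℝ) :
    ∑ x, ∑ z, Qs q r (α ++ [x, z]) * (u x * w (pr L α x z)) =
    ∑ x, ∑ z, Qs q r (α ++ [x, z]) * (w x * u (pr L α x z)) := by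
  have key : ∀ u w : X → ℝ, ∑ x, ∑ z, Qs q r (α ++ [x, z]) * (u x * w (pr L α x z)) =
      ∑ x, ∑ z, (if L (α ++ [x]) ∧ L (α ++ [z]) then Qs q r (α ++ [x, z]) * (u x * w z) else 0)
      + ∑ x, ∑ z, (if L (α ++ [z]) then 0 else Qs q r (α ++ [x, z]) * (u x * w x)) := by
    intro u w
    simp only [← Finset.sum_add_distrib]
    refine Finset.sum_congr rfl fun x _ => Finset.sum_congr rfl fun z _ => ?_
    by_cases hx : L (α ++ [x])
    · by_cases hz : L (α ++ [z]) <;> simp [hx, hz, pr]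
    · have : Qs q r (α ++ [x, z]) = 0 := G.Qs_eq_zero _ _ fun h2 => hx (G.pre1 h2)
      simp [this]
  rw [key u w, key w u]
  congr 1
  · rw [Finset.sum_comm]
    refine Finset.sum_congr rfl fun x _ => Finset.sum_congr rfl fun z _ => ?_
    by_cases hx : L (α ++ [x]) <;> by_cases hz : L (α ++ [z]) <;> simp [hx, hz]
    rw [G.Qs_swap r α h hk z x hz hx]; ring
  · refine Finset.sum_congr rfl fun x _ => Finset.sum_congr rfl fun z _ => ?_
    rw [mul_comm (u x)]

theorem GD.Fm_symm (G : GD L m k q c) (r : ℕ) (α : List X) (h : L α) (hk : α.length < k)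
    (u w : Option X → ℝ) : Fm L q r α u w = Fm L q r α w u := by
  rw [Fm_expand, Fm_expand, G.pair_symm r α h hk (fun x => u (some x)) (fun x => w (some x))]
  ring

def ht (t : ℝ) : Option X → ℝ := fun i => i.elim (1 - t) (fun _ => t)

theorem Tm_ht (α : List X) (x : X) (t : ℝ) : Tm L α x (ht t) = ht t := by
  funext i
  cases i <;> rfl

theorem Nf_ht (r : ℕ) (α : List X) (t : ℝ) :
    Nf q r α (ht t) = t * Qs q (r+1) α + (1 - t) * Qs q r α := by
  rw [Nf_apply, Qs_succ, Finset.mul_sum]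
  simp only [ht, Option.elim]
  congr 1
  · exact Finset.sum_congr rfl fun _ _ => by ring
  · ring

theorem Fm_ht (r : ℕ) (α : List X) (w : Option X → ℝ) (t : ℝ) :
    Fm L q r α w (ht t) = t * Nf q (r+1) α w + (1 - t) * Nf q r α w := by
  rw [Fm_apply']
  simp only [Tm_ht, Nf_ht]
  simp only [Nf_apply, mul_add, Finset.mul_sum]
  have : ∑ x, w (some x) * (t * Qs q (r + 1) (α ++ [x])) + ∑ x, w (some x) * ((1 - t) * Qs q r (α ++ [x])) =
    ∑ i, t * (Qs q (r + 1) (α ++ [i]) * w (some i)) + ∑ i, (1 - t) * (Qs q r (α ++ [i]) * w (some i)) := by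
    congr 1 <;> exact Finset.sum_congr rfl fun _ _ => by ring
  simp only [Finset.sum_add_distrib]
  linarith

theorem GD.Nf_zero (G : GD L m k q c) (r : ℕ) (α : List X) (h : ¬ L α) : Nf q r α = 0 := by
  apply LinearMap.ext
  intro w
  rw [Nf_apply, G.Qs_eq_zero _ _ h, Finset.sum_eq_zero]
  · simp
  · intro z _
    rw [G.Qs_eq_zero _ _ fun h2 => h (G.h_hered _ _ h2)]; simp

theorem GD.Fm_zero (G : GD L m k q c) (r : ℕ) (α : List X) (h : ¬ L α) (u w) :
    Fm L q r α u w = 0 := by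
  rw [Fm_apply', G.Nf_zero r α h, Finset.sum_eq_zero]
  · simp
  · intro z _
    rw [G.Nf_zero r _ fun h2 => h (G.h_hered _ _ h2)]; simp

end Grd

namespace Grd

variable {L : List X → Prop} {m k : ℕ} {q : List X → ℝ} {c : ℕ → ℝ}

theorem GD.int1 (G : GD L m k q c) {α : List X} {x y z : X} (hz : L (α ++ [z]))
    (h : L (α ++ [x, y, z])) : L (α ++ [x, z]) := by
  have := G.h_interval α [x] [y] z hz (by simpa using h)
  simpa using this

theorem GD.Qs_swap2 (G : GD L m k q c) (r : ℕ) (α : List X) (hk : α.length + 1 < k)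
    (x y z : X) (hy : L (α ++ [x, y])) (hz : L (α ++ [x, z])) :
    Qs q r (α ++ [x, y, z]) = Qs q r (α ++ [x, z, y]) := by
  have := G.Qs_swap r (α ++ [x]) (G.pre1 hy) (by simpa using hk) y z (by simpa using hy)
    (by simpa using hz) []
  simpa using this

theorem GD.sum1 (G : GD L m k q c) (r : ℕ) (α : List X) (h : L α) (hk : α.length + 1 < k)
    (v : X → ℝ) :
    ∑ x, ∑ y, ∑ z, (if L (α ++ [y]) ∧ L (α ++ [z]) then
      Qs q r (α ++ [x, y, z]) * (v y * v z - v x * v y) else 0) = 0 := by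
  obtain ⟨d, hd⟩ : ∃ d : X → X → X → ℝ, ∀ x y z, d x y z =
    if L (α ++ [x]) ∧ L (α ++ [y]) ∧ L (α ++ [z]) then Qs q r (α ++ [x, y, z]) else 0 :=
    ⟨_, fun _ _ _ => rfl⟩
  have d1 : ∀ x y z, d x y z = d y x z := by
    intro x y z
    rw [hd, hd]
    by_cases hx : L (α ++ [x]) <;> by_cases hy : L (α ++ [y]) <;> simp [hx, hy]
    rw [G.Qs_swap r α h (by omega) x y hx hy]
  have d2 : ∀ x y z, d x y z = d x z y := by
    intro x y z
    rw [hd, hd]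
    by_cases hx : L (α ++ [x]) <;> by_cases hy : L (α ++ [y]) <;> by_cases hz : L (α ++ [z]) <;>
      simp [hx, hy, hz]
    by_cases h1 : L (α ++ [x, y, z])
    · exact G.Qs_swap2 r α hk x y z (G.pre2 h1) (G.int1 hz h1)
    · rw [G.Qs_eq_zero _ _ h1]
      by_cases h2 : L (α ++ [x, z, y])
      · have h3 := G.Qs_swap2 r α hk x z y (G.pre2 h2) (G.int1 hy h2)
        rw [h3, G.Qs_eq_zero _ _ h1]
      · rw [G.Qs_eq_zero _ _ h2]
  have e : ∀ x y z, (if L (α ++ [y]) ∧ L (α ++ [z]) then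
      Qs q r (α ++ [x, y, z]) * (v y * v z - v x * v y) else 0) =
      d x y z * (v y * v z) - d x y z * (v x * v y) := by
    intro x y z
    rw [hd]
    by_cases hx : L (α ++ [x])
    · by_cases hy : L (α ++ [y]) <;> by_cases hz : L (α ++ [z]) <;> simp [hx, hy, hz]
      ring
    · rw [G.Qs_eq_zero _ (α ++ [x, y, z]) fun h2 => hx (G.pre1 h2)]
      simp
  simp only [e, Finset.sum_sub_distrib]
  have s1 : ∑ x, ∑ y, ∑ z, d x y z * (v x * v y) = ∑ x, ∑ y, ∑ z, d x y z * (v x * v z) := by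
    refine Finset.sum_congr rfl fun x _ => ?_
    rw [Finset.sum_comm]
    exact Finset.sum_congr rfl fun y _ => Finset.sum_congr rfl fun z _ => by rw [d2]
  have s2 : ∑ x, ∑ y, ∑ z, d x y z * (v x * v z) = ∑ x, ∑ y, ∑ z, d x y z * (v y * v z) := by
    rw [Finset.sum_comm]
    exact Finset.sum_congr rfl fun y _ => Finset.sum_congr rfl fun z _ =>
      Finset.sum_congr rfl fun z _ => by rw [d1]
  rw [s1, s2, sub_self]

theorem GD.sum3 (G : GD L m k q c) (r : ℕ) (α : List X) (hk : α.length + 1 < k)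
    (v : X → ℝ) :
    ∑ x, ∑ y, ∑ z, (if ¬ L (α ++ [y]) ∧ L (α ++ [z]) then
      Qs q r (α ++ [x, y, z]) * (v x * v z - v x * v x) else 0) =
    ∑ x, ∑ y, ∑ z, (if L (α ++ [y]) ∧ ¬ L (α ++ [z]) ∧ L (α ++ [x, z]) then
      Qs q r (α ++ [x, y, z]) * (v x * v y - v x * v x) else 0) := by
  refine Finset.sum_congr rfl fun x _ => ?_
  rw [Finset.sum_comm]
  refine Finset.sum_congr rfl fun y _ => Finset.sum_congr rfl fun z _ => ?_
  by_cases hy : L (α ++ [y]) <;> by_cases hz : L (α ++ [z]) <;> simp [hy, hz]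
  by_cases hxz : L (α ++ [x, z])
  · simp only [hxz, if_true]
    by_cases hxy : L (α ++ [x, y])
    · rw [G.Qs_swap2 r α hk x y z hxy hxz]
    · rw [G.Qs_eq_zero _ (α ++ [x, z, y]) fun h2 => hxy (G.int1 hy h2),
        G.Qs_eq_zero _ (α ++ [x, y, z]) fun h2 => hxy (G.pre2 h2)]
  · rw [G.Qs_eq_zero _ (α ++ [x, z, y]) fun h2 => hxz (G.pre2 h2)]
    simp [hxz]

theorem GD.sum5 (G : GD L m k q c) (r : ℕ) (α : List X) (h : L α) (hk : α.length + 1 < k)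
    (v : X → ℝ) :
    0 ≤ ∑ x, ∑ y, ∑ z, ((if L (α ++ [y]) ∧ ¬ L (α ++ [z]) ∧ L (α ++ [x, z]) then
      Qs q r (α ++ [x, y, z]) * (v x * v y - v x * v x) else 0) +
      (if L (α ++ [y]) ∧ ¬ L (α ++ [z]) ∧ ¬ L (α ++ [x, z]) then
      Qs q r (α ++ [x, y, z]) * (v y * v y - v x * v y) else 0)) := by
  obtain ⟨U, hU⟩ : ∃ U : X → X → X → ℝ, ∀ x y z, U x y z =
    (if L (α ++ [y]) ∧ ¬ L (α ++ [z]) ∧ L (α ++ [x, z]) then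
      Qs q r (α ++ [x, y, z]) * (v x * v y - v x * v x) else 0) +
      (if L (α ++ [y]) ∧ ¬ L (α ++ [z]) ∧ ¬ L (α ++ [x, z]) then
      Qs q r (α ++ [x, y, z]) * (v y * v y - v x * v y) else 0) := ⟨_, fun _ _ _ => rfl⟩
  simp only [← hU]
  have s1 : ∑ x, ∑ y, ∑ z, U x y z = ∑ x, ∑ y, ∑ z, U y x z := Finset.sum_comm
  have s2 : 0 ≤ ∑ x, ∑ y, ∑ z, (U x y z + U y x z) := by
    refine Finset.sum_nonneg fun x _ => Finset.sum_nonneg fun y _ => ?_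
    by_cases hx : L (α ++ [x])
    swap
    · apply le_of_eq; symm
      refine Finset.sum_eq_zero fun z _ => ?_
      rw [hU, hU, G.Qs_eq_zero _ (α ++ [x, y, z]) fun h2 => hx (G.pre1 h2)]
      simp [hx]
    by_cases hy : L (α ++ [y])
    swap
    · apply le_of_eq; symm
      refine Finset.sum_eq_zero fun z _ => ?_
      rw [hU, hU, G.Qs_eq_zero _ (α ++ [y, x, z]) fun h2 => hy (G.pre1 h2)]
      simp [hy]
    have e : ∀ z, U x y z + U y x z = (v x - v y)^2 *
        ((if ¬ L (α ++ [z]) ∧ ¬ L (α ++ [x, z]) ∧ ¬ L (α ++ [y, z]) ∧ L (α ++ [x, y, z])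
          then Qs q r (α ++ [x, y, z]) else 0) -
        (if ¬ L (α ++ [z]) ∧ L (α ++ [x, z]) ∧ L (α ++ [y, z]) ∧ L (α ++ [x, y, z])
          then Qs q r (α ++ [x, y, z]) else 0)) := by
      intro z
      rw [hU, hU, ← G.Qs_swap r α h (by omega) x y hx hy [z]]
      by_cases hl : L (α ++ [x, y, z])
      · by_cases hz : L (α ++ [z]) <;> by_cases hxz : L (α ++ [x, z]) <;>
          by_cases hyz : L (α ++ [y, z]) <;> simp [hx, hy, hz, hxz, hyz, hl] <;> ring
      · rw [G.Qs_eq_zero _ (α ++ [x, y, z]) hl]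
        simp
    simp only [e, ← Finset.mul_sum, Finset.sum_sub_distrib, ← Finset.sum_filter]
    by_cases hxy : x = y
    · simp [hxy]
    · refine mul_nonneg (sq_nonneg _) ?_
      have := G.hPAMon α h (by omega) x (by simp [Cnt, hx]) y (by simp [Cnt, hy]) hxy r
      unfold Act Pas at this
      unfold Qs
      linarith
  simp only [Finset.sum_add_distrib] at s2
  linarith

theorem GD.pull_core (G : GD L m k q c) (r : ℕ) (α : List X) (h : L α) (hk : α.length + 1 < k)
    (v : X → ℝ) :
    ∑ x, ∑ y, ∑ z, Qs q r (α ++ [x, y, z]) * (v x * v (pr L α x y)) ≤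
    ∑ x, ∑ y, ∑ z, Qs q r (α ++ [x, y, z]) *
      (v (pr L α x y) * v (pr L α x (pr L (α ++ [x]) y z))) := by
  have e : ∀ x y z, Qs q r (α ++ [x, y, z]) *
      (v (pr L α x y) * v (pr L α x (pr L (α ++ [x]) y z))) =
      Qs q r (α ++ [x, y, z]) * (v x * v (pr L α x y)) +
      ((if L (α ++ [y]) ∧ L (α ++ [z]) then
      Qs q r (α ++ [x, y, z]) * (v y * v z - v x * v y) else 0) +
      ((if ¬ L (α ++ [y]) ∧ L (α ++ [z]) then
      Qs q r (α ++ [x, y, z]) * (v x * v z - v x * v x) else 0) +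
      (if L (α ++ [y]) ∧ ¬ L (α ++ [z]) ∧ ¬ L (α ++ [x, z]) then
      Qs q r (α ++ [x, y, z]) * (v y * v y - v x * v y) else 0))) := by
    intro x y z
    by_cases hl : L (α ++ [x, y, z])
    · by_cases hz : L (α ++ [z])
      · have hxz := G.int1 hz hl
        by_cases hy : L (α ++ [y]) <;> simp [pr, hz, hxz, hy] <;> ring
      · by_cases hxz : L (α ++ [x, z]) <;> 
          by_cases hy : L (α ++ [y]) <;> simp [pr, hz, hxz, hy] <;> ring_nf; simp
    · rw [G.Qs_eq_zero _ (α ++ [x, y, z]) hl]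
      simp
  simp only [e]
  have h1 := G.sum1 r α h hk v
  have h3 := G.sum3 r α hk v
  have h5 := G.sum5 r α h hk v
  simp only [Finset.sum_add_distrib] at h1 h3 h5 ⊢
  linarith

theorem GD.pull (G : GD L m k q c) (r : ℕ) (α : List X) (h : L α) (hk : α.length + 1 < k)
    (v : Option X → ℝ) :
    Fm L q (r + 1) α v v ≤ ∑ x, Fm L q r (α ++ [x]) (Tm L α x v) (Tm L α x v) := by
  simp only [Fm_expand, Tm_some, Tm_none, List.append_assoc, List.singleton_append,
    Finset.sum_add_distrib, ← Finset.sum_mul, ← Finset.mul_sum]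
  have e1 : ∑ x, ∑ y, Qs q r (α ++ [x, y]) * v (some (pr L α x y)) =
      ∑ x, Qs q (r + 1) (α ++ [x]) * v (some x) := by
    have := G.pair_symm r α h (by omega) (fun _ => 1) (fun x => v (some x))
    simp only [one_mul, mul_one] at this
    rw [this]
    refine Finset.sum_congr rfl fun x _ => ?_
    rw [Qs_succ, Finset.sum_mul]
    exact Finset.sum_congr rfl fun y _ => by simp
  have e2 : ∑ x, ∑ z, Qs q (r + 1) (α ++ [x, z]) * (v (some x) * v (some (pr L α x z))) =
      ∑ x, ∑ y, ∑ z, Qs q r (α ++ [x, y, z]) * (v (some x) * v (some (pr L α x y))) := by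
    refine Finset.sum_congr rfl fun x _ => Finset.sum_congr rfl fun y _ => ?_
    rw [Qs_succ, Finset.sum_mul]
    exact Finset.sum_congr rfl fun y _ => by simp
  have e3 := G.pull_core r α h hk (fun x => v (some x))
  rw [e1, e2, ← Qs_succ]
  simp only [Finset.mul_sum] at e3 ⊢
  linarith

end Grd

namespace Grd

variable {L : List X → Prop} {m k : ℕ} {q : List X → ℝ} {c : ℕ → ℝ}

/-- Hyperbolicity of a bilinear form. -/
def Hyp (f : (Option X → ℝ) →ₗ[ℝ] (Option X → ℝ) →ₗ[ℝ] ℝ) : Prop :=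
  ∀ v w, 0 < f w w → f v v * f w w ≤ (f v w)^2

def ev (j : Option X) : Option X → ℝ := fun i => if j = i then 1 else 0

theorem sum_ev (f : (Option X → ℝ) →ₗ[ℝ] ℝ) (v : Option X → ℝ) : ∑ j, f (ev j) * v j = f v := by
  rw [LinearMap.pi_apply_eq_sum_univ f v]
  refine Finset.sum_congr rfl fun j _ => ?_
  rw [smul_eq_mul, mul_comm]
  rfl

theorem Fm_ev (r : ℕ) (α : List X) (i : Option X) (w : Option X → ℝ) :
    Fm L q r α (ev i) w = Row L q r α i w := by
  rw [Fm_apply]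
  simp [ev]

theorem GD.Nf_nonneg (G : GD L m k q c) (r : ℕ) (α : List X) (w : Option X → ℝ)
    (hw : ∀ i, 0 ≤ w i) : 0 ≤ Nf q r α w :=
  add_nonneg (Finset.sum_nonneg fun z _ => mul_nonneg (G.Qs_nonneg _ _) (hw _))
    (mul_nonneg (G.Qs_nonneg _ _) (hw _))

theorem GD.Row_nonneg (G : GD L m k q c) (r : ℕ) (α : List X) (i : Option X) (w : Option X → ℝ)
    (hw : ∀ i, 0 ≤ w i) : 0 ≤ Row L q r α i w := by
  cases i with
  | none => exact G.Nf_nonneg r α w hw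
  | some x => exact G.Nf_nonneg r _ _ fun i => hw _

theorem GD.Fm_ht_pos (G : GD L m k q c) (r : ℕ) (α : List X) (h : L α) (hl : α.length + r ≤ m)
    (t : ℝ) (t0 : 0 < t) (t1 : t < 1) : 0 < Fm L q r α (ht t) (ht t) := by
  rw [Fm_ht, Nf_ht, Nf_ht]
  have h1 := G.Qs_pos r α h hl
  have h2 := G.Qs_nonneg (r+1) α
  have h3 := G.Qs_nonneg (r+1+1) α
  have h4 : 0 < 1 - t := by linarith
  positivity

theorem GD.step_t (G : GD L m k q c) (r : ℕ) (α : List X) (h : L α) (hk : α.length + 1 < k)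
    (hl : α.length + 1 + r ≤ m)
    (IH0 : Hyp (Fm L q r α)) (IHx : ∀ x, L (α ++ [x]) → Hyp (Fm L q r (α ++ [x])))
    (t : ℝ) (t0 : 0 < t) (t1 : t < 1) : Hyp (t • Fm L q (r+1) α + (1 - t) • Fm L q r α) := by
  have t2 : 0 < 1 - t := by linarith
  set f := t • Fm L q (r+1) α + (1 - t) • Fm L q r α with hf
  have fa : ∀ u w, f u w = t * Fm L q (r+1) α u w + (1 - t) * Fm L q r α u w := fun u w => rfl
  have fs : ∀ u v, f u v = f v u := by
    intro u v
    rw [fa, fa, G.Fm_symm _ α h (by omega) u v, G.Fm_symm _ α h (by omega) u v]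
  obtain ⟨M, hM⟩ : ∃ M : Matrix (Option X) (Option X) ℝ, ∀ i j, M i j = f (ev i) (ev j) :=
    ⟨Matrix.of fun i j => f (ev i) (ev j), fun _ _ => rfl⟩
  have hMv : ∀ v i, M.mulVec v i = f (ev i) v := by
    intro v i
    rw [← sum_ev (f (ev i)) v]
    simp only [Matrix.mulVec, dotProduct, hM]
  have hMn : ∀ v, M.mulVec v none = Fm L q r α v (ht t) := by
    intro v
    rw [hMv, fa, Fm_ev, Fm_ev, Fm_ht]; rfl
  have hMx : ∀ v x, M.mulVec v (some x) = Fm L q r (α ++ [x]) (Tm L α x v) (ht t) := by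
    intro v x
    rw [hMv, fa, Fm_ev, Fm_ev, Fm_ht]; rfl
  have hfM : ∀ u w, f u w = ∑ i, u i * M.mulVec w i := by
    intro u w
    rw [fs, ← sum_ev (f w) u]
    refine Finset.sum_congr rfl fun i _ => ?_
    rw [hMv, fs, mul_comm]
  have evn : ∀ j i : Option X, (0:ℝ) ≤ ev j i := by
    intro j i; unfold ev; split_ifs <;> norm_num
  have htp : ∀ i : Option X, 0 < ht t i := by
    intro i; cases i <;> simp [ht, t0, t1]
  have main := abstract_hyp M (fun i j => by rw [hM, hM, fs])
    (fun i j => by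
      rw [hM, fa, Fm_ev, Fm_ev]
      have := G.Row_nonneg r α i (ev j) (evn j)
      have := G.Row_nonneg (r+1) α i (ev j) (evn j)
      positivity)
    (ht t) htp none
    (by
      intro i
      have nv : ∀ r i, Nf q r α (ev i) = i.elim (Qs q r α) (fun x => Qs q r (α ++ [x])) := by
        intro r i
        rw [Nf_apply]
        cases i <;> simp [ev]
      have e : M none i = t * Nf q (r+1) α (ev i) + (1 - t) * Nf q r α (ev i) := by
        rw [hM, fa, Fm_ev, Fm_ev]; rfl
      cases i with
      | none =>
        left
        rw [e, nv, nv]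
        have h1 := G.Qs_pos r α h (by omega)
        have h2 := G.Qs_nonneg (r+1) α
        simp only [Option.elim]
        positivity
      | some x =>
        by_cases hx : L (α ++ [x])
        · left
          rw [e, nv, nv]
          have h1 := G.Qs_pos r (α ++ [x]) hx (by simp; omega)
          have h2 := G.Qs_nonneg (r+1) (α ++ [x])
          simp only [Option.elim]
          positivity
        · right
          intro j
          rw [hM, fa, Fm_ev, Fm_ev]
          simp only [Row]
          rw [G.Nf_zero _ _ hx, G.Nf_zero _ _ hx]
          simp)
    (by
      intro v
      rw [← hfM, fa, Fintype.sum_option]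
      have q0 : (1 - t) * Fm L q r α v v ≤
          ht t (none : Option X) * M.mulVec v none ^ 2 / M.mulVec (ht t) none := by
        rw [hMn, hMn, mul_div_assoc]
        have hp := G.Fm_ht_pos r α h (by omega) t t0 t1
        apply mul_le_mul_of_nonneg_left _ t2.le
        rw [le_div_iff₀ hp]
        exact IH0 _ _ hp
      have qx : ∀ x, t * Fm L q r (α ++ [x]) (Tm L α x v) (Tm L α x v) ≤
          ht t (some x) * M.mulVec v (some x) ^ 2 / M.mulVec (ht t) (some x) := by
        intro x
        rw [hMx, hMx, Tm_ht, mul_div_assoc]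
        by_cases hx : L (α ++ [x])
        · have hp := G.Fm_ht_pos r (α ++ [x]) hx (by simp; omega) t t0 t1
          apply mul_le_mul_of_nonneg_left _ t0.le
          rw [le_div_iff₀ hp]
          exact IHx x hx _ _ hp
        · simp [G.Fm_zero r _ hx]
      have q1 := mul_le_mul_of_nonneg_left (G.pull r α h hk v) t0.le
      rw [Finset.mul_sum] at q1
      have q2 := Finset.sum_le_sum fun x (_ : x ∈ (Finset.univ : Finset X)) => qx x
      linarith)
  intro v w hw
  apply hyp_of_hyperplane f fs (ht t) _ v w hw
  intro v hv
  rw [hfM] at hv ⊢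
  exact main v hv

theorem GD.step (G : GD L m k q c) (r : ℕ) (α : List X) (h : L α) (hk : α.length + 1 < k)
    (hl : α.length + 1 + r ≤ m)
    (IH0 : Hyp (Fm L q r α)) (IHx : ∀ x, L (α ++ [x]) → Hyp (Fm L q r (α ++ [x]))) :
    Hyp (Fm L q (r+1) α) := by
  intro v w hw
  have hlim : ∀ a b : ℝ, Filter.Tendsto (fun t : ℝ => t * a + (1 - t) * b)
      (nhdsWithin 1 (Set.Iio 1)) (nhds a) := by
    intro a b
    have : ContinuousAt (fun t : ℝ => t * a + (1 - t) * b) 1 := by fun_prop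
    have h2 := this.tendsto.mono_left (nhdsWithin_le_nhds (s := Set.Iio 1))
    simpa using h2
  have e1 := hlim (Fm L q (r+1) α v v) (Fm L q r α v v)
  have e2 := hlim (Fm L q (r+1) α w w) (Fm L q r α w w)
  have e3 := hlim (Fm L q (r+1) α v w) (Fm L q r α v w)
  refine le_of_tendsto_of_tendsto (e1.mul e2) (e3.pow 2) ?_
  have p1 := e2.eventually (lt_mem_nhds hw)
  have p2 : ∀ᶠ t : ℝ in nhdsWithin 1 (Set.Iio 1), 0 < t :=
    nhdsWithin_le_nhds (lt_mem_nhds one_pos)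
  filter_upwards [p1, p2, self_mem_nhdsWithin] with t h1 h2 h3
  exact G.step_t r α h hk hl IH0 IHx t h2 h3 v w h1

theorem GD.all_hyp (G : GD L m k q c)
    (base : ∀ α, L α → α.length < k → Hyp (Fm L q 0 α)) (r : ℕ) :
    ∀ α, L α → α.length + r < k → Hyp (Fm L q r α) := by
  have := G.hk2
  induction r with
  | zero => intro α h hk; exact base α h hk
  | succ r ih =>
    intro α h hk
    refine G.step r α h (by omega) (by omega) (ih α h (by omega)) ?_
    intro x hx
    exact ih _ hx (by simp; omega)

theorem GD.final (G : GD L m k q c) (he : L []) (hk1 : 1 ≤ k)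
    (base : ∀ α, L α → α.length < k → Hyp (Fm L q 0 α)) :
    Lq L q (k - 1) * Lq L q (k + 1) ≤ (Lq L q k) ^ 2 := by
  obtain ⟨r, rfl⟩ : ∃ r, k = r + 1 := ⟨k - 1, by omega⟩
  have hk2 := G.hk2
  have hL : ∀ j, Lq L q j = Qs q j [] := by
    intro j
    unfold Lq Qs
    rw [Finset.sum_filter]
    refine Finset.sum_congr rfl fun β _ => ?_
    split_ifs with hh
    · rfl
    · rw [List.nil_append, G.hq_zero _ hh]
  have hy := G.all_hyp base r [] he (by simp) (ht 1) (ht 0)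
  have e : ∀ s t : ℝ, Fm L q r [] (ht s) (ht t) =
      t * (s * Qs q (r+1+1) [] + (1 - s) * Qs q (r+1) []) +
      (1 - t) * (s * Qs q (r+1) [] + (1 - s) * Qs q r []) := by
    intro s t
    rw [Fm_ht, Nf_ht, Nf_ht]
  simp only [e] at hy
  have hp := G.Qs_pos r [] he (by simp; omega)
  have := hy (by simpa using hp)
  simp only [hL, Nat.add_sub_cancel]
  simp at this
  linarith

end Grd

namespace Grd

variable {L : List X → Prop} {m k : ℕ} {q : List X → ℝ} {c : ℕ → ℝ}

theorem mem_Cnt {α : List X} {x : X} : x ∈ Cnt L α ↔ L (α ++ [x]) := by simp [Cnt]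

theorem GD.mem_par (G : GD L m k q c) {α : List X} {x y : X} :
    y ∈ parClass L α x ↔ L (α ++ [y]) ∧ ¬ L (α ++ [x, y]) := by
  simp only [parClass, Finset.mem_filter, mem_Cnt]
  constructor
  · rintro ⟨h1, rfl | h2⟩
    · refine ⟨h1, fun h3 => ?_⟩
      have := G.h_simple _ h3
      simp [List.nodup_append] at this
    · exact ⟨h1, h2⟩
  · rintro ⟨h1, h2⟩
    exact ⟨h1, Or.inr h2⟩

theorem GD.par_refl (G : GD L m k q c) {α : List X} {x : X} (hx : L (α ++ [x])) :
    x ∈ parClass L α x := by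
  simp [parClass, mem_Cnt, hx]

theorem GD.par_trans (G : GD L m k q c) {α : List X} (h : L α) (hk : α.length < k) {x y z : X}
    (hx : L (α ++ [x])) (hy : L (α ++ [y])) (hz : L (α ++ [z]))
    (h1 : ¬ L (α ++ [x, y])) (h2 : ¬ L (α ++ [y, z])) : ¬ L (α ++ [x, z]) := by
  intro h3
  obtain ⟨w, hw, hw2⟩ := G.h_exch _ _ h3 hy (by simp)
  have hn := G.h_simple _ hw2
  simp only [List.mem_append, List.mem_cons, List.not_mem_nil, or_false] at hw
  rcases hw with hw | rfl | rfl
  · simp [List.nodup_append] at hn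
    exact (hn.2.2 w hw).2 rfl
  · apply h1
    rw [G.L_swap α h hk w y hx hy]
    simpa using hw2
  · exact h2 (by simpa using hw2)

theorem GD.par_eq (G : GD L m k q c) {α : List X} (h : L α) (hk : α.length < k) {x y : X}
    (hx : L (α ++ [x])) (hy : y ∈ parClass L α x) : parClass L α y = parClass L α x := by
  rw [G.mem_par] at hy
  obtain ⟨hy, hxy⟩ := hy
  have hyx : ¬ L (α ++ [y, x]) := by rwa [G.L_swap α h hk y x hy hx]
  ext z
  rw [G.mem_par, G.mem_par]
  constructor
  · rintro ⟨h1, h2⟩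
    exact ⟨h1, G.par_trans h hk hx hy h1 hxy h2⟩
  · rintro ⟨h1, h2⟩
    exact ⟨h1, G.par_trans h hk hy hx h1 hyx h2⟩

theorem GD.Par_mem (G : GD L m k q c) {α : List X} (h : L α) (hk : α.length < k) {C : Finset X}
    (hC : C ∈ Par L α) {x : X} (hx : x ∈ C) : L (α ++ [x]) ∧ parClass L α x = C := by
  obtain ⟨y, hy, rfl⟩ := Finset.mem_image.1 hC
  rw [mem_Cnt] at hy
  exact ⟨(G.mem_par.1 hx).1, G.par_eq h hk hy hx⟩

theorem GD.sum_Par (G : GD L m k q c) {α : List X} (h : L α) (hk : α.length < k) (f : X → ℝ) :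
    ∑ x ∈ Cnt L α, f x = ∑ C ∈ Par L α, ∑ x ∈ C, f x := by
  rw [← Finset.sum_fiberwise_of_maps_to (t := Par L α) (g := parClass L α)
    (fun x hx => Finset.mem_image_of_mem _ hx)]
  refine Finset.sum_congr rfl fun C hC => Finset.sum_congr ?_ fun _ _ => rfl
  ext x
  rw [Finset.mem_filter, mem_Cnt]
  constructor
  · rintro ⟨h1, rfl⟩
    exact G.par_refl h1
  · intro hx
    exact G.Par_mem h hk hC hx

/-- Final quadratic inequality. -/
theorem scale_ineq {ι : Type*} (P : Finset ι) (b S : ι → ℝ) (s : ℝ)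
    (hb : ∀ C ∈ P, b C ≤ 1)
    (hs : 1 ≤ s ∨ ((∀ C ∈ P, b C < 1) ∧ (1 - s) * ∑ C ∈ P, 1 / (1 - b C) ≤ 1)) :
    (1 - s) * (∑ C ∈ P, S C)^2 ≤ ∑ C ∈ P, (1 - b C) * S C ^ 2 := by
  have hnn : 0 ≤ ∑ C ∈ P, (1 - b C) * S C ^ 2 :=
    Finset.sum_nonneg fun C hC => mul_nonneg (by linarith [hb C hC]) (sq_nonneg _)
  by_cases h1 : 1 ≤ s
  · nlinarith [sq_nonneg (∑ C ∈ P, S C)]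
  · rcases hs with hs | ⟨hs1, hs2⟩
    · exact absurd hs h1
    · have cs : (∑ C ∈ P, S C)^2 ≤ (∑ C ∈ P, 1 / (1 - b C)) * ∑ C ∈ P, (1 - b C) * S C ^ 2 := by
        apply Finset.sum_sq_le_sum_mul_sum_of_sq_le_mul
        · intro C hC
          have := hs1 C hC
          exact div_nonneg zero_le_one (by linarith)
        · intro C hC
          exact mul_nonneg (by linarith [hb C hC]) (sq_nonneg _)
        · intro C hC
          have : 1 - b C ≠ 0 := by linarith [hs1 C hC]
          apply le_of_eq
          field_simp
      have h2 : 0 ≤ 1 - s := by linarith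
      calc _ ≤ (1 - s) * ((∑ C ∈ P, 1 / (1 - b C)) * ∑ C ∈ P, (1 - b C) * S C ^ 2) :=
            mul_le_mul_of_nonneg_left cs h2
        _ = ((1 - s) * (∑ C ∈ P, 1 / (1 - b C))) * ∑ C ∈ P, (1 - b C) * S C ^ 2 := by ring
        _ ≤ 1 * ∑ C ∈ P, (1 - b C) * S C ^ 2 := mul_le_mul_of_nonneg_right hs2 hnn
        _ = _ := one_mul _

/-- The quantity `b` for a single letter. -/
def bx (L : List X → Prop) (q : List X → ℝ) (c : ℕ → ℝ) (α : List X) (x : X) : ℝ :=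
  ∑ y ∈ Des L α x, scaledWt q c α * scaledWt q c (α ++ [x, y]) / (scaledWt q c (α ++ [x])) ^ 2

theorem GD.base_ineq (G : GD L m k q c) {α : List X} (h : L α) (hk : α.length < k) (v : X → ℝ) :
    q α * ∑ x, ∑ z, q (α ++ [x, z]) * (v x * v (pr L α x z)) ≤ (∑ x, q (α ++ [x]) * v x)^2 := by
  set c0 := c α.length with hc0
  set c1 := c (α.length + 1) with hc1
  set c2 := c (α.length + 2) with hc2
  have p0 : 0 < c0 := G.hc _
  have p1 : 0 < c1 := G.hc _
  have p2 : 0 < c2 := G.hc _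
  set s := c1^2 / (c0 * c2) with hs
  have sp : 0 < s := by positivity
  have w0 : scaledWt q c α = q α / c0 := rfl
  have w1 : ∀ x, scaledWt q c (α ++ [x]) = q (α ++ [x]) / c1 := by intro x; simp [scaledWt, hc1]
  have w2 : ∀ x y, scaledWt q c (α ++ [x, y]) = q (α ++ [x, y]) / c2 := by
    intro x y; simp [scaledWt, hc2]
  obtain ⟨u, hu⟩ : ∃ u : X → ℝ, ∀ x, u x = q (α ++ [x]) * v x := ⟨_, fun _ => rfl⟩
  have hS : ∑ x, q (α ++ [x]) * v x = ∑ x ∈ Cnt L α, u x := by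
    unfold Cnt
    rw [Finset.sum_filter]
    refine Finset.sum_congr rfl fun x _ => ?_
    split_ifs with hx
    · rw [hu]
    · rw [G.hq_zero _ hx, zero_mul]
  -- rewriting of one row
  have hrow : ∀ x, L (α ++ [x]) → s * (q α * ∑ z, q (α ++ [x, z]) * (v x * v (pr L α x z))) =
      (u x * ∑ z ∈ Cnt L α, u z - u x * ∑ z ∈ parClass L α x, u z) + bx L q c α x * u x ^ 2 := by
    intro x hx
    have hqx := G.hq_pos _ hx
    have r1 : ∑ z ∈ Cnt L α, u z - ∑ z ∈ parClass L α x, u z =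
        ∑ z, if L (α ++ [z]) ∧ L (α ++ [x, z]) then u z else 0 := by
      have : parClass L α x = Finset.univ.filter (fun z => L (α ++ [z]) ∧ ¬ L (α ++ [x, z])) := by
        ext z; rw [G.mem_par]; simp
      rw [this]
      unfold Cnt
      rw [Finset.sum_filter, Finset.sum_filter, ← Finset.sum_sub_distrib]
      refine Finset.sum_congr rfl fun z _ => ?_
      by_cases hz : L (α ++ [z]) <;> by_cases hxz : L (α ++ [x, z]) <;> simp [hz, hxz]
    have r2 : bx L q c α x * u x ^ 2 =
        ∑ z, if L (α ++ [x, z]) ∧ ¬ L (α ++ [z]) then s * (q α * q (α ++ [x, z])) * v x ^2 else 0 := by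
      unfold bx Des
      rw [Finset.sum_mul, Finset.sum_filter]
      refine Finset.sum_congr rfl fun z _ => ?_
      split_ifs
      · rw [w0, w1, w2, hu, hs]
        field_simp
      · rfl
    rw [← mul_sub, r1, r2, Finset.mul_sum, Finset.mul_sum, Finset.mul_sum, ← Finset.sum_add_distrib]
    refine Finset.sum_congr rfl fun z _ => ?_
    by_cases hxz : L (α ++ [x, z])
    · by_cases hz : L (α ++ [z])
      · have lm := G.hLogMod α h hk x (mem_Cnt.2 hx) z (mem_Cnt.2 hz) hxz
        rw [w0, w1, w1, w2] at lm
        have lm2 : s * (q α * q (α ++ [x, z])) = q (α ++ [x]) * q (α ++ [z]) := by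
          rw [hs]
          field_simp
          field_simp at lm
          linarith
        simp only [pr, hz, hxz, and_self, if_true, not_true_eq_false, and_false, if_false, hu]
        linear_combination (v x * v z) * lm2
      · simp [pr, hz, hxz]
        ring
    · rw [G.hq_zero _ hxz]
      simp [hxz]
  have hrow0 : ∀ x, ¬ L (α ++ [x]) → s * (q α * ∑ z, q (α ++ [x, z]) * (v x * v (pr L α x z))) = 0 := by
    intro x hx
    rw [Finset.sum_eq_zero]
    · simp
    · intro z _
      rw [G.hq_zero _ fun h2 => hx (G.pre1 h2)]; simp
  have e1 : s * (q α * ∑ x, ∑ z, q (α ++ [x, z]) * (v x * v (pr L α x z))) =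
      ∑ x ∈ Cnt L α, ((u x * ∑ z ∈ Cnt L α, u z - u x * ∑ z ∈ parClass L α x, u z)
        + bx L q c α x * u x ^ 2) := by
    rw [Finset.mul_sum, Finset.mul_sum]
    conv_rhs => unfold Cnt
    rw [Finset.sum_filter]
    refine Finset.sum_congr rfl fun x _ => ?_
    split_ifs with hx
    · exact hrow x hx
    · exact hrow0 x hx
  have hcard : ∀ C ∈ Par L α, 1 ≤ C.card := by
    intro C hC
    obtain ⟨y, hy, rfl⟩ := Finset.mem_image.1 hC
    exact Finset.card_pos.2 ⟨y, G.par_refl (mem_Cnt.1 hy)⟩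
  have e2 : ∑ x ∈ Cnt L α, u x * ∑ z ∈ parClass L α x, u z =
      ∑ C ∈ Par L α, (∑ x ∈ C, u x)^2 := by
    rw [G.sum_Par h hk]
    refine Finset.sum_congr rfl fun C hC => ?_
    rw [sq, Finset.sum_mul]
    refine Finset.sum_congr rfl fun x hx => ?_
    rw [(G.Par_mem h hk hC hx).2]
  have e3 : ∑ x ∈ Cnt L α, bx L q c α x * u x ^ 2 =
      ∑ C ∈ Par L α, bClass L q c α C * (∑ x ∈ C, u x)^2 := by
    rw [G.sum_Par h hk]
    refine Finset.sum_congr rfl fun C hC => ?_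
    unfold bClass
    by_cases h1 : C.card = 1
    · obtain ⟨a, rfl⟩ := Finset.card_eq_one.1 h1
      simp [bx]
    · rw [if_neg h1, zero_mul]
      refine Finset.sum_eq_zero fun x hx => ?_
      have := hcard C hC
      unfold bx
      rw [G.hFewDes α h hk C hC (by omega) x hx]
      simp
  have hb : ∀ C ∈ Par L α, bClass L q c α C ≤ 1 := by
    intro C hC
    unfold bClass
    by_cases h1 : C.card = 1
    · rw [if_pos h1]
      obtain ⟨a, rfl⟩ := Finset.card_eq_one.1 h1
      have ha := (G.Par_mem h hk hC (Finset.mem_singleton_self a)).1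
      have sm := G.hSynMon α h hk a (mem_Cnt.2 ha)
      rw [Finset.sum_singleton, ← Finset.sum_div]
      have : 0 < scaledWt q c (α ++ [a]) := by
        rw [w1]; exact div_pos (G.hq_pos _ ha) p1
      rw [div_le_one (by positivity)]
      exact sm
    · rw [if_neg h1]; exact zero_le_one
  have fin := scale_ineq (Par L α) (bClass L q c α) (fun C => ∑ x ∈ C, u x) s hb (by
    rcases G.hScaleMon α h hk with h1 | h1
    · left
      rw [hs, le_div_iff₀ (by positivity), one_mul]
      exact h1
    · exact Or.inr h1)
  rw [← G.sum_Par h hk u] at fin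
  rw [Finset.sum_add_distrib, Finset.sum_sub_distrib, ← Finset.sum_mul, e2, e3] at e1
  simp only [sub_mul, one_mul, Finset.sum_sub_distrib] at fin
  rw [hS]
  refine le_of_mul_le_mul_left ?_ sp
  rw [e1]
  linarith

theorem GD.base (G : GD L m k q c) (α : List X) (h : L α) (hk : α.length < k) :
    Hyp (Fm L q 0 α) := by
  intro v w hw
  refine hyp_of_hyperplane (Fm L q 0 α) (G.Fm_symm 0 α h hk) (ht 0) ?_ v w hw
  intro v hv
  have e := Fm_expand (L := L) (q := q) 0 α v v
  have b := G.base_ineq h hk (fun x => v (some x))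
  rw [Fm_ht, Nf_apply, Nf_apply] at hv
  simp only [Qs_zero, zero_mul, zero_add, sub_zero, one_mul] at e hv
  have qp := G.hq_pos α h
  set S := ∑ x, q (α ++ [x]) * v (some x)
  set D := ∑ x, ∑ z, q (α ++ [x, z]) * (v (some x) * v (some (pr L α x z)))
  rw [e]
  have hS : S = - (q α * v none) := by linarith
  rw [hS] at b ⊢
  have : q α * (q α * (v none * v none) + v none * -(q α * v none) + v none * -(q α * v none) + D) ≤ q α * 0 := by
    nlinarith
  exact le_of_mul_le_mul_left this qp

end Grd

/-- **Log-concavity for interval greedoids** (first main theorem).  Let `G = (X, L)` be an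
interval greedoid of rank `m`, let `1 ≤ k < m`, and let `q : L → ℝ_{>0}` be a
`k`-admissible weight function (extended by `0` off `L`), with scale sequence `c`.  Then
`L_q(k)² ≥ L_q(k-1)·L_q(k+1)`. -/
theorem interval_greedoid_log_concavity
    (L : List X → Prop) (m : ℕ)
    -- `G = (X, L)` is an interval greedoid of rank `m`:
    (h_empty : L [])
    (h_simple : ∀ α : List X, L α → α.Nodup)
    (h_hered : ∀ α β : List X, L (α ++ β) → L α)
    (h_exch : ∀ α β : List X, L α → L β → β.length < α.length → ∃ x ∈ α, L (β ++ [x]))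
    (h_interval : ∀ (α β γ : List X) (x : X),
      L (α ++ [x]) → L (α ++ β ++ γ ++ [x]) → L (α ++ β ++ [x]))
    (h_rk_le : ∀ α : List X, L α → α.length ≤ m)
    (h_rk_ex : ∃ α : List X, L α ∧ α.length = m)
    (k : ℕ) (hk1 : 1 ≤ k) (hk2 : k < m)
    -- `q` is a positive weight function on `L`, extended by zero off `L`:
    (q : List X → ℝ)
    (hq_pos : ∀ α : List X, L α → 0 < q α)
    (hq_zero : ∀ α : List X, ¬ L α → q α = 0)
    -- the scale sequence:
    (c : ℕ → ℝ) (hc : ∀ i, 0 < c i)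
    -- `k`-admissibility: the following hold for all `α ∈ L` with `|α| < k`.
    -- (ContInv): continuation invariance
    (hContInv : ∀ α : List X, L α → α.length < k →
      ∀ x ∈ Grd.Cnt L α, ∀ y ∈ Grd.Cnt L α, ∀ β : List X,
        q (α ++ [x, y] ++ β) = q (α ++ [y, x] ++ β))
    -- (PAMon): passive-active monotonicity
    (hPAMon : ∀ α : List X, L α → α.length < k →
      ∀ x ∈ Grd.Cnt L α, ∀ y ∈ Grd.Cnt L α, x ≠ y → ∀ r : ℕ,
        (∑ z ∈ Grd.Act L α x y, ∑ β ∈ wordsLen X r, q (α ++ [x, y, z] ++ β)) ≤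
          (∑ z ∈ Grd.Pas L α x y, ∑ β ∈ wordsLen X r, q (α ++ [x, y, z] ++ β)))
    -- (LogMod): log-modularity
    (hLogMod : ∀ α : List X, L α → α.length < k →
      ∀ x ∈ Grd.Cnt L α, ∀ y ∈ Grd.Cnt L α, L (α ++ [x, y]) →
        Grd.scaledWt q c (α ++ [x]) * Grd.scaledWt q c (α ++ [y]) =
          Grd.scaledWt q c α * Grd.scaledWt q c (α ++ [x, y]))
    -- (FewDes): few descendants
    (hFewDes : ∀ α : List X, L α → α.length < k →
      ∀ C ∈ Grd.Par L α, 2 ≤ C.card → ∀ x ∈ C, Grd.Des L α x = ∅)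
    -- (SynMon): syntactic monotonicity
    (hSynMon : ∀ α : List X, L α → α.length < k →
      ∀ x ∈ Grd.Cnt L α,
        (∑ y ∈ Grd.Des L α x, Grd.scaledWt q c α * Grd.scaledWt q c (α ++ [x, y])) ≤
          (Grd.scaledWt q c (α ++ [x])) ^ 2)
    -- (ScaleMon): scale monotonicity
    (hScaleMon : ∀ α : List X, L α → α.length < k →
      c α.length * c (α.length + 2) ≤ (c (α.length + 1)) ^ 2 ∨
        ((∀ C ∈ Grd.Par L α, Grd.bClass L q c α C < 1) ∧
          (1 - (c (α.length + 1)) ^ 2 / (c α.length * c (α.length + 2))) *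
              (∑ C ∈ Grd.Par L α, 1 / (1 - Grd.bClass L q c α C)) ≤ 1)) :
    Grd.Lq L q (k - 1) * Grd.Lq L q (k + 1) ≤ (Grd.Lq L q k) ^ 2 := by
  have G : Grd.GD L m k q c :=
    ⟨h_simple, h_hered, h_exch, h_interval, h_rk_ex, hk2, hq_pos, hq_zero, hc, hContInv, hPAMon,
      hLogMod, hFewDes, hSynMon, hScaleMon⟩
  exact G.final h_empty hk1 G.base
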